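/- Let $n \ge 1$ and let $a$ be an $n \times n$ complex matrix. Then $\mathrm{Tr}(a) = \mathrm{Tr}(|a|)$ (equality as complex numbers, the right-hand side being the nonnegative real trace of $|a|$) if and only if $a$ is positive semidefinite. -/

import Mathlib

open Matrix
open scoped ComplexOrder

open scoped MatrixOrder in
/-- `matAbs a` is `|a|`, the unique positive semidefinite square root of `aᴴ * a`. -/
noncomputable def matAbs {n : ℕ} (a : Matrix (Fin n) (Fin n) ℂ) : Matrix (Fin n) (Fin n) ℂ :=
  CFC.sqrt (aᴴ * a)

theorem aux_diag {n : ℕ} (b : Matrix (Fin n) (Fin n) ℂ) (l : Fin n → ℝ) (hl : ∀ i, 0 ≤ l i)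
    (h : bᴴ * b = diagonal (fun i => (l i : ℂ)) * diagonal (fun i => (l i : ℂ)))
    (ht : trace b = ∑ i, (l i : ℂ)) : b = diagonal (fun i => (l i : ℂ)) := by
  have hcol : ∀ j, ∑ i, Complex.normSq (b i j) = l j ^ 2 := by
    intro j
    have h1 := congrFun (congrFun h j) j
    rw [diagonal_mul_diagonal, diagonal_apply_eq, Matrix.mul_apply] at h1
    have h2 : ((∑ i, Complex.normSq (b i j) : ℝ) : ℂ) = ((l j ^ 2 : ℝ) : ℂ) := by
      push_cast
      rw [pow_two, ← h1]
      refine Finset.sum_congr rfl fun i _ => ?_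
      rw [Complex.normSq_eq_conj_mul_self]
      rfl
    exact_mod_cast h2
  have hle : ∀ j, Complex.normSq (b j j) ≤ l j ^ 2 := fun j => by
    rw [← hcol j]
    exact Finset.single_le_sum (f := fun i => Complex.normSq (b i j))
      (fun i _ => Complex.normSq_nonneg _) (Finset.mem_univ j)
  have hre : ∀ j, (b j j).re ≤ l j := fun j => by
    have := hle j
    rw [Complex.normSq_apply] at this
    have h5 := abs_le_of_sq_le_sq (a := (b j j).re) (b := l j) (by nlinarith [mul_self_nonneg (b j j).im]) (hl j)
    exact (le_abs_self _).trans h5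
  have hsum : ∑ j, (b j j).re = ∑ j, l j := by
    have := congrArg Complex.re ht
    simpa [trace] using this
  have heq : ∀ j, (b j j).re = l j := fun j =>
    (Finset.sum_eq_sum_iff_of_le (fun i _ => hre i)).1 hsum j (Finset.mem_univ j)
  have him : ∀ j, (b j j).im = 0 := fun j => by
    have := hle j
    rw [Complex.normSq_apply, heq] at this
    have h3 : (b j j).im * (b j j).im = 0 := by nlinarith [mul_self_nonneg (b j j).im]
    simpa using h3
  ext i j
  by_cases hij : i = j
  · subst hij
    rw [diagonal_apply_eq]
    apply Complex.ext <;> simp [heq, him]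
  · rw [diagonal_apply_ne _ hij]
    have h1 := hcol j
    rw [← Finset.add_sum_erase _ _ (Finset.mem_univ j), Complex.normSq_apply, heq, him] at h1
    have h2 : ∑ i ∈ Finset.univ.erase j, Complex.normSq (b i j) = 0 := by nlinarith
    rw [Finset.sum_eq_zero_iff_of_nonneg (fun i _ => Complex.normSq_nonneg _)] at h2
    exact Complex.normSq_eq_zero.1 (h2 i (by simp [hij]))

open scoped MatrixOrder in
theorem trace_eq_trace_abs_iff_posSemidef {n : ℕ} (hn : 1 ≤ n)
    (a : Matrix (Fin n) (Fin n) ℂ) :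
    Matrix.trace a = Matrix.trace (matAbs a) ↔ a.PosSemidef := by
  have hP : (matAbs a).PosSemidef := nonneg_iff_posSemidef.1 (CFC.sqrt_nonneg _)
  have hsq : matAbs a * matAbs a = aᴴ * a :=
    CFC.sqrt_mul_sqrt_self _ (nonneg_iff_posSemidef.2 (posSemidef_conjTranspose_mul_self a))
  constructor
  · intro h
    suffices a = matAbs a by rw [this]; exact hP
    generalize matAbs a = P at *
    have hs := hP.1.spectral_theorem
    set U := (hP.1.eigenvectorUnitary : Matrix (Fin n) (Fin n) ℂ) with hU
    have hU1 : Uᴴ * U = 1 := Unitary.coe_star_mul_self hP.1.eigenvectorUnitary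
    have hU2 : U * Uᴴ = 1 := Unitary.coe_mul_star_self hP.1.eigenvectorUnitary
    have hs' : P = U * diagonal (fun i => (hP.1.eigenvalues i : ℂ)) * Uᴴ := hs
    set D := diagonal (fun i => (hP.1.eigenvalues i : ℂ)) with hD
    have hD' : Uᴴ * P * U = D := by
      conv_lhs => rw [hs']
      calc _ = (Uᴴ * U) * D * (Uᴴ * U) := by noncomm_ring
        _ = D := by rw [hU1]; simp
    have key : Uᴴ * a * U = D := by
      apply aux_diag _ _ hP.eigenvalues_nonneg
      · rw [← hD, ← hD']
        calc _ = Uᴴ * aᴴ * (U * Uᴴ) * a * U := by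
              simp only [conjTranspose_mul, conjTranspose_conjTranspose]; noncomm_ring
          _ = Uᴴ * (aᴴ * a) * U := by rw [hU2]; noncomm_ring
          _ = Uᴴ * (P * 1 * P) * U := by rw [← hsq]; simp
          _ = _ := by rw [← hU2]; noncomm_ring
      · rw [trace_mul_cycle, hU2, one_mul, h, hP.1.trace_eq_sum_eigenvalues]
        rfl
    rw [hs', ← key]
    calc a = (U * Uᴴ) * a * (U * Uᴴ) := by rw [hU2]; simp
      _ = _ := by noncomm_ring
  · intro h
    have : matAbs a = a := by
      rw [matAbs, h.1.eq]
      exact CFC.sqrt_mul_self a (nonneg_iff_posSemidef.2 h)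
    rw [this]
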